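/- For every n ≥ 0, the map j_n : ℂ[GL(n,q)] → ℂ[GL(n+1,q)], defined by j_n(e_g) = q^{−n}·Σ_{h ∈ Ext_U(g)} e_h, is an injective homomorphism of (non-unital) ℂ-algebras: it is linear, injective, and satisfies j_n(a·b) = j_n(a)·j_n(b) for all a, b ∈ ℂ[GL(n,q)]. (The embedding underlying the realization of A(GLU) as an inductive limit of group algebras, Section 7.) -/

import Mathlib

/-!
STATEMENT 4: the embedding `j_n : ℂ[GL(n,q)] → ℂ[GL(n+1,q)]` is an injective homomorphism
of (non-unital) ℂ-algebras (the embedding underlying the realization of A(GLU) as an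
inductive limit of group algebras, Section 7).
-/

variable (F : Type) [Field F] [Fintype F] [DecidableEq F]

/-- `GL(n,q)`, the group of invertible `n × n` matrices over the finite field `F` (`q = |F|`). -/
abbrev GLn (n : ℕ) := GL (Fin n) F

/-- The complex group algebra `ℂ[GL(n,q)]`. -/
abbrev GA (n : ℕ) := MonoidAlgebra ℂ (GLn F n)

open scoped Classical in
/-- `Ext_U(g)`: the set of `h ∈ GL(n+1,q)` whose top-left `n × n` corner is `g` and whose last
row is `(0,...,0,1)`. -/
noncomputable def ExtUSet {n : ℕ} (g : GLn F n) : Finset (GLn F (n + 1)) :=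
  Finset.univ.filter (fun h =>
    (∀ i j : Fin n, (h : Matrix (Fin (n + 1)) (Fin (n + 1)) F) i.castSucc j.castSucc
        = (g : Matrix (Fin n) (Fin n) F) i j) ∧
    (∀ j : Fin n, (h : Matrix (Fin (n + 1)) (Fin (n + 1)) F) (Fin.last n) j.castSucc = 0) ∧
    (h : Matrix (Fin (n + 1)) (Fin (n + 1)) F) (Fin.last n) (Fin.last n) = 1)

/-- The embedding `j_n : ℂ[GL(n,q)] → ℂ[GL(n+1,q)]`,
`e_g ↦ q^{-n} ∑_{h ∈ Ext_U(g)} e_h`, as a linear map. -/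
noncomputable def paraEmbU (n : ℕ) : GA F n →ₗ[ℂ] GA F (n + 1) :=
  (Finsupp.lsum ℂ (fun g => LinearMap.toSpanSingleton ℂ (GA F (n + 1))
    (((Fintype.card F : ℂ) ^ n)⁻¹ • ∑ h ∈ ExtUSet F g, MonoidAlgebra.single h (1 : ℂ)))) ∘ₗ
    (MonoidAlgebra.coeffLinearEquiv ℂ).toLinearMap

/-- The matrix of the extension of `g` by the column `v`. -/
noncomputable def extMat {n : ℕ} (g : GLn F n) (v : Fin n → F) :
    Matrix (Fin (n + 1)) (Fin (n + 1)) F :=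
  (Matrix.fromBlocks (g : Matrix (Fin n) (Fin n) F) (Matrix.of fun i (_ : Fin 1) => v i) 0
    (1 : Matrix (Fin 1) (Fin 1) F)).submatrix finSumFinEquiv.symm finSumFinEquiv.symm

theorem extMat_det {n : ℕ} (g : GLn F n) (v : Fin n → F) : (extMat F g v).det ≠ 0 := by
  unfold extMat
  rw [Matrix.det_submatrix_equiv_self, Matrix.det_fromBlocks_zero₂₁]
  simp only [Matrix.det_one, mul_one]
  exact (Matrix.isUnits_det_units g).ne_zero

noncomputable def extGL {n : ℕ} (g : GLn F n) (v : Fin n → F) : GLn F (n + 1) :=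
  Matrix.GeneralLinearGroup.mkOfDetNeZero (extMat F g v) (extMat_det F g v)

theorem symm_castSucc {n : ℕ} (i : Fin n) :
    (finSumFinEquiv : Fin n ⊕ Fin 1 ≃ Fin (n + 1)).symm i.castSucc = Sum.inl i :=
  finSumFinEquiv_symm_apply_castAdd i

theorem symm_last {n : ℕ} :
    (finSumFinEquiv : Fin n ⊕ Fin 1 ≃ Fin (n + 1)).symm (Fin.last n) = Sum.inr 0 :=
  finSumFinEquiv_symm_apply_natAdd (m := n) (0 : Fin 1)

theorem coe_extGL {n : ℕ} (g : GLn F n) (v : Fin n → F) :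
    (extGL F g v : Matrix (Fin (n + 1)) (Fin (n + 1)) F) = extMat F g v := rfl

theorem extMat_cc {n : ℕ} (g : GLn F n) (v : Fin n → F) (i j : Fin n) :
    extMat F g v i.castSucc j.castSucc = (g : Matrix (Fin n) (Fin n) F) i j := by
  simp [extMat, symm_castSucc, -finSumFinEquiv_symm_apply_castSucc]

theorem extMat_cl {n : ℕ} (g : GLn F n) (v : Fin n → F) (i : Fin n) :
    extMat F g v i.castSucc (Fin.last n) = v i := by
  simp only [extMat, Matrix.submatrix_apply, symm_castSucc, symm_last]
  simp

theorem extMat_lc {n : ℕ} (g : GLn F n) (v : Fin n → F) (j : Fin n) :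
    extMat F g v (Fin.last n) j.castSucc = 0 := by
  simp only [extMat, Matrix.submatrix_apply, symm_castSucc, symm_last]
  simp

theorem extMat_ll {n : ℕ} (g : GLn F n) (v : Fin n → F) :
    extMat F g v (Fin.last n) (Fin.last n) = 1 := by
  simp only [extMat, Matrix.submatrix_apply, symm_last]
  simp

theorem extGL_inj {n : ℕ} {g g' : GLn F n} {v v' : Fin n → F}
    (h : extGL F g v = extGL F g' v') : g = g' ∧ v = v' := by
  have hm : extMat F g v = extMat F g' v' := by
    rw [← coe_extGL, ← coe_extGL, h]
  constructor
  · ext i j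
    rw [← extMat_cc F g v, hm, extMat_cc]
  · funext i
    rw [← extMat_cl F g v, hm, extMat_cl]

theorem extGL_mul {n : ℕ} (g g' : GLn F n) (v v' : Fin n → F) :
    extGL F g v * extGL F g' v' =
      extGL F (g * g') ((g : Matrix (Fin n) (Fin n) F).mulVec v' + v) := by
  apply Units.ext
  rw [Units.val_mul, coe_extGL, coe_extGL, coe_extGL]
  ext i j
  rw [Matrix.mul_apply, Fin.sum_univ_castSucc]
  refine Fin.lastCases ?_ (fun i => ?_) i <;> refine Fin.lastCases ?_ (fun j => ?_) j <;>
    simp only [extMat_cc, extMat_cl, extMat_lc, extMat_ll]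
  · simp
  · simp
  · simp [Matrix.mulVec, dotProduct]
  · simp [Matrix.mul_apply]

theorem extGL_injective {n : ℕ} (g : GLn F n) : Function.Injective (extGL F g) :=
  fun _ _ h => (extGL_inj F h).2

theorem extUSet_eq {n : ℕ} (g : GLn F n) :
    ExtUSet F g = Finset.univ.map ⟨extGL F g, extGL_injective F g⟩ := by
  ext h
  simp only [ExtUSet, Finset.mem_filter, Finset.mem_univ, true_and, Finset.mem_map,
    Function.Embedding.coeFn_mk]
  constructor
  · rintro ⟨h1, h2, h3⟩
    refine ⟨fun i => (h : Matrix (Fin (n + 1)) (Fin (n + 1)) F) i.castSucc (Fin.last n), ?_⟩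
    apply Units.ext
    rw [coe_extGL]
    ext i j
    refine Fin.lastCases ?_ (fun i => ?_) i <;> refine Fin.lastCases ?_ (fun j => ?_) j
    · rw [extMat_ll, h3]
    · rw [extMat_lc, h2]
    · rw [extMat_cl]
    · rw [extMat_cc, h1]
  · rintro ⟨v, rfl⟩
    rw [coe_extGL]
    exact ⟨extMat_cc F g v, extMat_lc F g v, extMat_ll F g v⟩

theorem paraEmbU_single {n : ℕ} (g : GLn F n) (c : ℂ) :
    paraEmbU F n (MonoidAlgebra.single g c) =
      c • (((Fintype.card F : ℂ) ^ n)⁻¹ •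
        ∑ v : Fin n → F, MonoidAlgebra.single (extGL F g v) (1 : ℂ)) := by
  simp [paraEmbU, extUSet_eq]

theorem card_ne : ((Fintype.card F : ℂ)) ≠ 0 := by
  exact_mod_cast Fintype.card_ne_zero

theorem sum_mul_sum {n : ℕ} (g g' : GLn F n) :
    (∑ v : Fin n → F, MonoidAlgebra.single (extGL F g v) (1 : ℂ)) *
      (∑ v : Fin n → F, MonoidAlgebra.single (extGL F g' v) (1 : ℂ)) =
    ((Fintype.card F : ℂ) ^ n) •
      ∑ v : Fin n → F, MonoidAlgebra.single (extGL F (g * g') v) (1 : ℂ) := by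
  rw [Finset.sum_mul_sum, Finset.sum_comm]
  simp only [MonoidAlgebra.single_mul_single, extGL_mul, mul_one]
  have : ∀ v' : Fin n → F, (∑ v : Fin n → F, MonoidAlgebra.single
      (extGL F (g * g') ((g : Matrix (Fin n) (Fin n) F).mulVec v' + v)) (1 : ℂ)) =
      ∑ v : Fin n → F, MonoidAlgebra.single (extGL F (g * g') v) (1 : ℂ) := fun v' =>
    Equiv.sum_comp (Equiv.addLeft ((g : Matrix (Fin n) (Fin n) F).mulVec v'))
      (fun v => MonoidAlgebra.single (extGL F (g * g') v) (1 : ℂ))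
  simp only [this, Finset.sum_const, Finset.card_univ, Fintype.card_fun, Fintype.card_fin]
  rw [← Nat.cast_smul_eq_nsmul ℂ]
  push_cast
  rfl

theorem paraEmbU_coeff {n : ℕ} (a : GA F n) (g : GLn F n) :
    (paraEmbU F n a).coeff (extGL F g 0) = ((Fintype.card F : ℂ) ^ n)⁻¹ * a.coeff g := by
  classical
  induction a using MonoidAlgebra.induction_linear with
  | zero => simp
  | add a b ha hb => simp [ha, hb, mul_add]
  | single g' c =>
    rw [paraEmbU_single]
    have key : (∑ v : Fin n → F, MonoidAlgebra.single (extGL F g' v) (1 : ℂ)).coeff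
        (extGL F g 0) = if g' = g then 1 else 0 := by
      simp only [MonoidAlgebra.coeff_sum, Finsupp.finsetSum_apply, MonoidAlgebra.coeff_single,
        Finsupp.single_apply]
      by_cases h : g' = g
      · subst h
        rw [if_pos rfl, Finset.sum_eq_single 0]
        · simp
        · intro v _ hv
          rw [if_neg]
          exact fun e => hv (extGL_inj F e).2
        · simp
      · rw [if_neg h]
        apply Finset.sum_eq_zero
        intro v _
        rw [if_neg]
        exact fun e => h (extGL_inj F e).1
    rw [MonoidAlgebra.coeff_smul, MonoidAlgebra.coeff_smul, Finsupp.smul_apply,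
      Finsupp.smul_apply, key, MonoidAlgebra.coeff_single, Finsupp.single_apply]
    by_cases h : g' = g <;> simp [h, mul_comm]

theorem paraEmbU_injective_and_multiplicative (n : ℕ) :
    Function.Injective (paraEmbU F n) ∧
    ∀ a b : GA F n, paraEmbU F n (a * b) = paraEmbU F n a * paraEmbU F n b := by
  have hq : ((Fintype.card F : ℂ) ^ n) ≠ 0 := pow_ne_zero _ (card_ne F)
  constructor
  · intro a b hab
    ext g
    have h := congrArg (fun x => x.coeff (extGL F g 0)) hab
    simp only [paraEmbU_coeff] at h
    exact mul_left_cancel₀ (inv_ne_zero hq) h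
  · intro a b
    induction a using MonoidAlgebra.induction_linear with
    | zero => simp
    | add a a' ha hb => rw [add_mul, map_add, map_add, add_mul, ha, hb]
    | single g c =>
      induction b using MonoidAlgebra.induction_linear with
      | zero => simp
      | add a a' ha hb => rw [mul_add, map_add, map_add, mul_add, ha, hb]
      | single g' c' =>
        rw [MonoidAlgebra.single_mul_single, paraEmbU_single, paraEmbU_single, paraEmbU_single]
        simp only [smul_mul_assoc, mul_smul_comm, sum_mul_sum, smul_smul]
        congr 1
        field_simp
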